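/- arXiv:2305.12869 — 2 statements merged into one kernel-verified Lean document; each statement's English description precedes it below -/
import Mathlib

section
/- Every transposed Poisson algebra satisfies the first special Gelfand–Dorfman identity: [x₁, (x₂⋅x₃)⋅x₄] − [x₁, x₂⋅x₃]⋅x₄ − [x₁, x₂⋅x₄]⋅x₃ + ([x₁,x₂]⋅x₃)⋅x₄ = 0 for all x₁, x₂, x₃, x₄ ∈ A. -/
/-!
Let `l z`, `r z` and `o z` multiply by `z` the left argument, the right argument and the value of
the bracket. These operations commute, are multiplicative in `z`, and satisfy `2 o z = l z + r z`.
Applying this to the product of `z` and `w` gives `2 (o z)(o w) = (l z)(l w) + (r z)(r w)`, while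
multiplying the relations for `z` and `w` gives `4 (o z)(o w) = (l z + r z)(l w + r w)`. Comparing
the two, `(l z)(r w) + (l w)(r z) = (l z)(l w) + (r z)(r w)`, that is, `(r z - l z)(r w - l w) = 0`.
As `r z - l z = 2 (r z - o z)`, the left-hand side is `4 (r z - o z)(r w - o w)`, and the vanishing
of `(r z - o z)(r w - o w)` is the special identity.
-/

section TransposedLeibniz

variable {R A : Type*} [CommSemiring R] [AddCommGroup A] [Module R A]

/-- The transposed Leibniz rule, by which the bracket of a transposed Poisson algebra is
compatible with its product. The bracket is an arbitrary binary operation, so that the rule can be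
studied apart from bilinearity and the Lie axioms. -/
def IsTransposedLeibniz (mul : A →ₗ[R] A →ₗ[R] A) (br : A → A → A) : Prop :=
  ∀ x y z : A, 2 • mul (br x y) z = br (mul x z) y + br x (mul y z)

namespace IsTransposedLeibniz

variable {mul : A →ₗ[R] A →ₗ[R] A} {br : A → A → A}

theorem two_nsmul_mul_mul (h : IsTransposedLeibniz mul br)
    (hassoc : ∀ x y z : A, mul (mul x y) z = mul x (mul y z)) (x y z w : A) :
    2 • mul (mul (br x y) z) w = br (mul (mul x z) w) y + br x (mul (mul y z) w) := by
  simpa only [hassoc] using h x y (mul z w)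

theorem four_nsmul_mul_mul (h : IsTransposedLeibniz mul br) (x y z w : A) :
    4 • mul (mul (br x y) z) w =
      (br (mul (mul x z) w) y + br (mul x z) (mul y w)) +
        (br (mul x w) (mul y z) + br x (mul (mul y z) w)) := by
  calc
    4 • mul (mul (br x y) z) w = 2 • mul (2 • mul (br x y) z) w := by
      simp only [map_nsmul, LinearMap.smul_apply, smul_smul, Nat.reduceMul]
    _ = 2 • mul (br (mul x z) y) w + 2 • mul (br x (mul y z)) w := by
      rw [h x y z, map_add, LinearMap.add_apply, smul_add]
    _ = (br (mul (mul x z) w) y + br (mul x z) (mul y w)) +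
          (br (mul x w) (mul y z) + br x (mul (mul y z) w)) := by
      rw [h (mul x z) y w, h x (mul y z) w]

theorem br_mul_mul_add_br_mul_mul (h : IsTransposedLeibniz mul br)
    (hassoc : ∀ x y z : A, mul (mul x y) z = mul x (mul y z)) (x y z w : A) :
    br (mul x z) (mul y w) + br (mul x w) (mul y z) =
      br (mul (mul x z) w) y + br x (mul (mul y z) w) := by
  linear_combination (norm := module)
    2 • h.two_nsmul_mul_mul hassoc x y z w - h.four_nsmul_mul_mul x y z w

end IsTransposedLeibniz

theorem stmt_4_general (h_two : IsSMulRegular A (2 : ℕ))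
    (mul : A →ₗ[R] A →ₗ[R] A) (br : A → A → A)
    (hmul_comm : ∀ x y : A, mul x y = mul y x)
    (hmul_assoc : ∀ x y z : A, mul (mul x y) z = mul x (mul y z))
    (htp : IsTransposedLeibniz mul br) (x1 x2 x3 x4 : A) :
    br x1 (mul (mul x2 x3) x4) - mul (br x1 (mul x2 x3)) x4
      - mul (br x1 (mul x2 x4)) x3 + mul (mul (br x1 x2) x3) x4 = 0 := by
  have mul_right_comm : mul (mul x2 x4) x3 = mul (mul x2 x3) x4 := by
    rw [hmul_assoc, hmul_comm x4, ← hmul_assoc]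
  have outer_x4 := htp x1 (mul x2 x3) x4
  have outer_x3 := htp x1 (mul x2 x4) x3
  rw [mul_right_comm] at outer_x3
  refine h_two.right_eq_zero_of_smul ?_
  linear_combination (norm := module)
    htp.two_nsmul_mul_mul hmul_assoc x1 x2 x3 x4 - outer_x4 - outer_x3
      - htp.br_mul_mul_add_br_mul_mul hmul_assoc x1 x2 x3 x4

end TransposedLeibniz

theorem stmt_4 {K A : Type*} [Field K] [CharZero K] [AddCommGroup A] [Module K A]
    (mul : A →ₗ[K] A →ₗ[K] A) (br : A →ₗ[K] A →ₗ[K] A)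
    (hmul_comm : ∀ x y : A, mul x y = mul y x)
    (hmul_assoc : ∀ x y z : A, mul (mul x y) z = mul x (mul y z))
    (hbr_anti : ∀ x y : A, br x y = - br y x)
    (hbr_jacobi : ∀ x y z : A, br (br x y) z + br (br y z) x + br (br z x) y = 0)
    (htp : ∀ x y z : A, 2 • mul (br x y) z = br (mul x z) y + br x (mul y z)) :
    ∀ x1 x2 x3 x4 : A,
      br x1 (mul (mul x2 x3) x4) - mul (br x1 (mul x2 x3)) x4
        - mul (br x1 (mul x2 x4)) x3 + mul (mul (br x1 x2) x3) x4 = 0 := by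
  have : IsAddTorsionFree A := .of_isTorsionFree K A
  exact stmt_4_general (IsSMulRegular.of_ne_zero two_ne_zero) mul (fun x y ↦ br x y)
    hmul_comm hmul_assoc htp
end

section
/- Let A be a transposed Poisson algebra. Then for all x₁, x₂, x₃, x₄ ∈ A, [x₁,x₄]⋅(x₂⋅x₃) = [x₁, x₂⋅(x₃⋅x₄)] + 3(x₁⋅([x₂,x₄]⋅x₃)) − 2(x₁⋅[x₂, x₃⋅x₄]) − x₁⋅(x₂⋅[x₃,x₄]). -/
/-!
For fixed `a b c d` put `F a = [a, bcd]`, `F b = [b, acd]`, and so on. The transposed Leibniz rule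
gives `2 [a,b]cd = F a - F b`, and applying it twice gives
`4 [a,b]cd = F a - F b + [ac,bd] + [ad,bc]`, so `F a - F b = [ac,bd] + [ad,bc]`. Combining three
such relations yields `2 [ab,cd] = F a + F b - F c - F d`. Thus twice every term of the identity is
a combination of `F a, F b, F c, F d`, and the coefficients agree.
-/

section TransposedLeibniz

variable {A : Type*} [NonUnitalCommRing A] {br : A → A → A}

theorem two_nsmul_br_mul_eq_sub (skew : ∀ x y, br x y = -br y x)
    (leibniz : ∀ x y z, 2 • (br x y * z) = br (x * z) y + br x (y * z)) (x y z : A) :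
    2 • (br x y * z) = br x (y * z) - br y (x * z) := by
  rw [leibniz, skew (x * z) y, neg_add_eq_sub]

theorem br_sub_br_eq_add (skew : ∀ x y, br x y = -br y x)
    (leibniz : ∀ x y z, 2 • (br x y * z) = br (x * z) y + br x (y * z)) (x y z w : A) :
    br x (y * z * w) - br y (x * z * w) = br (x * z) (y * w) + br (x * w) (y * z) := by
  have once : 2 • (br x y * (z * w)) = br x (y * z * w) - br y (x * z * w) := by
    rw [two_nsmul_br_mul_eq_sub skew leibniz, mul_assoc, mul_assoc]
  have twice : 2 • (2 • (br x y * (z * w))) =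
      br x (y * z * w) - br y (x * z * w) + (br (x * z) (y * w) + br (x * w) (y * z)) :=
    calc
      2 • (2 • (br x y * (z * w)))
        = 2 • ((2 • (br x y * z)) * w) := by rw [smul_mul_assoc, mul_assoc]
      _ = 2 • (br (x * z) y * w) + 2 • (br x (y * z) * w) := by
        rw [leibniz, add_mul, nsmul_add]
      _ = br (x * z * w) y + br (x * z) (y * w) + (br (x * w) (y * z) + br x (y * z * w)) := by
        rw [leibniz, leibniz]
      _ = _ := by rw [skew (x * z * w) y]; abel
  rwa [once, two_nsmul, add_right_inj] at twice

theorem two_nsmul_br_mul_mul (skew : ∀ x y, br x y = -br y x)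
    (leibniz : ∀ x y z, 2 • (br x y * z) = br (x * z) y + br x (y * z)) (a b c d : A) :
    2 • br (a * b) (c * d) =
      br a (b * c * d) + br b (a * c * d) - br c (a * b * d) - br d (a * b * c) := by
  have hab : br a (b * c * d) - br b (a * c * d) = br (a * c) (b * d) + br (a * d) (b * c) :=
    br_sub_br_eq_add skew leibniz a b c d
  have hac : br a (b * c * d) - br c (a * b * d) = br (a * b) (c * d) + br (a * d) (b * c) := by
    simpa only [mul_comm c b] using br_sub_br_eq_add skew leibniz a c b d
  have had : br a (b * c * d) - br d (a * b * c) = br (a * b) (c * d) + br (a * c) (b * d) := by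
    simpa only [mul_comm, mul_left_comm] using br_sub_br_eq_add skew leibniz a d b c
  linear_combination (norm := abel) hab - hac - had

theorem stmt_10_general (skew : ∀ x y, br x y = -br y x)
    (leibniz : ∀ x y z, 2 • (br x y * z) = br (x * z) y + br x (y * z))
    (two_regular : IsSMulRegular A 2) (x₁ x₂ x₃ x₄ : A) :
    br x₁ x₄ * (x₂ * x₃) =
      br x₁ (x₂ * (x₃ * x₄)) + 3 • (x₁ * (br x₂ x₄ * x₃)) - 2 • (x₁ * br x₂ (x₃ * x₄))
        - x₁ * (x₂ * br x₃ x₄) := by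
  have h₁₄ : 2 • (br x₁ x₄ * (x₂ * x₃)) =
      br x₁ (x₂ * x₃ * x₄) - br x₄ (x₁ * x₂ * x₃) := by
    simpa only [mul_comm, mul_left_comm] using
      two_nsmul_br_mul_eq_sub skew leibniz x₁ x₄ (x₂ * x₃)
  have h₂₄ : 2 • (x₁ * (br x₂ x₄ * x₃)) =
      br x₂ (x₁ * x₃ * x₄) - br x₄ (x₁ * x₂ * x₃) := by
    simpa only [mul_comm, mul_left_comm] using
      two_nsmul_br_mul_eq_sub skew leibniz x₂ x₄ (x₁ * x₃)
  have h₃₄ : 2 • (x₁ * (x₂ * br x₃ x₄)) =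
      br x₃ (x₁ * x₂ * x₄) - br x₄ (x₁ * x₂ * x₃) := by
    simpa only [mul_comm, mul_left_comm] using
      two_nsmul_br_mul_eq_sub skew leibniz x₃ x₄ (x₁ * x₂)
  have h_mixed : 2 • (x₁ * br x₂ (x₃ * x₄)) =
      br (x₁ * x₂) (x₃ * x₄) + br x₂ (x₁ * x₃ * x₄) := by
    simpa only [mul_comm, mul_left_comm] using leibniz x₂ (x₃ * x₄) x₁
  have h_pairs := two_nsmul_br_mul_mul skew leibniz x₁ x₂ x₃ x₄
  apply two_regular
  beta_reduce
  rw [← mul_assoc x₂ x₃ x₄]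
  linear_combination (norm := abel) h₁₄ - 3 • h₂₄ + 2 • h_mixed + h₃₄ + h_pairs

end TransposedLeibniz

/-- The non-unital commutative ring whose product is a given commutative associative bilinear map,
so that such a map can be handled with the usual multiplicative notation. -/
abbrev nonUnitalCommRingOfBilinear {R A : Type*} [CommSemiring R] [AddCommGroup A] [Module R A]
    (mul : A →ₗ[R] A →ₗ[R] A) (mul_comm : ∀ x y, mul x y = mul y x)
    (mul_assoc : ∀ x y z, mul (mul x y) z = mul x (mul y z)) : NonUnitalCommRing A where
  mul x y := mul x y
  left_distrib x := map_add (mul x)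
  right_distrib := mul.map_add₂
  zero_mul := mul.map_zero₂
  mul_zero x := map_zero (mul x)
  mul_comm := mul_comm
  mul_assoc := mul_assoc

theorem stmt_10 {K A : Type*} [Field K] [CharZero K] [AddCommGroup A] [Module K A]
    (mul : A →ₗ[K] A →ₗ[K] A) (br : A →ₗ[K] A →ₗ[K] A)
    (hmul_comm : ∀ x y : A, mul x y = mul y x)
    (hmul_assoc : ∀ x y z : A, mul (mul x y) z = mul x (mul y z))
    (hbr_anti : ∀ x y : A, br x y = - br y x)
    (hbr_jacobi : ∀ x y z : A, br (br x y) z + br (br y z) x + br (br z x) y = 0)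
    (htp : ∀ x y z : A, 2 • mul (br x y) z = br (mul x z) y + br x (mul y z)) :
    ∀ x1 x2 x3 x4 : A,
      mul (br x1 x4) (mul x2 x3) =
        br x1 (mul x2 (mul x3 x4)) + 3 • mul x1 (mul (br x2 x4) x3)
        - 2 • mul x1 (br x2 (mul x3 x4)) - mul x1 (mul x2 (br x3 x4)) := by
  let _ := nonUnitalCommRingOfBilinear mul hmul_comm hmul_assoc
  have : IsAddTorsionFree A := .of_isTorsionFree K A
  exact stmt_10_general (br := fun x y => br x y) hbr_anti htp (nsmul_right_injective two_ne_zero)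
end
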